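/- For every smooth function ψ : ℝ³ → ℂ⁴, the operator L² commutes with Dirac's operator K: L²(Kψ) = K(L²ψ). -/

import Mathlib

noncomputable section

open Matrix

/-- Physical space ℝ³. -/
abbrev E3 := EuclideanSpace ℝ (Fin 3)

/-- The Pauli matrices σ₁, σ₂, σ₃ (indexed by `Fin 3`, with `pauli 0 = σ₁`, etc.). -/
def pauli : Fin 3 → Matrix (Fin 2) (Fin 2) ℂ
  | 0 => !![0, 1; 1, 0]
  | 1 => !![0, -Complex.I; Complex.I, 0]
  | 2 => !![1, 0; 0, -1]

/-- The 4×4 block matrix `[[A, B], [C, D]]` built from 2×2 blocks. -/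
def qblock (A B C D : Matrix (Fin 2) (Fin 2) ℂ) : Matrix (Fin 4) (Fin 4) ℂ :=
  Matrix.reindex finSumFinEquiv finSumFinEquiv (Matrix.fromBlocks A B C D)

/-- The Dirac matrix `β = γ⁰ = [[I₂,0],[0,−I₂]]`. -/
def betaM : Matrix (Fin 4) (Fin 4) ℂ := qblock 1 0 0 (-1)

/-- The spin matrices `Σⱼ = [[σⱼ,0],[0,σⱼ]]` for j = 1,2,3. -/
def SigM (j : Fin 3) : Matrix (Fin 4) (Fin 4) ℂ := qblock (pauli j) 0 0 (pauli j)

/-- The partial derivative `∂ⱼψ` of a ℂ⁴-valued function on ℝ³. -/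
def pd (j : Fin 3) (ψ : E3 → Fin 4 → ℂ) : E3 → Fin 4 → ℂ :=
  fun x => fderiv ℝ ψ x (EuclideanSpace.single j 1)

/-- The orbital angular momentum operator `Lⱼψ = −i (x × ∇ψ)ⱼ` (cyclic indices in `Fin 3`). -/
def Lop (j : Fin 3) (ψ : E3 → Fin 4 → ℂ) : E3 → Fin 4 → ℂ :=
  fun x => (-Complex.I) • (x (j + 1) • pd (j + 2) ψ x - x (j + 2) • pd (j + 1) ψ x)

/-- The operator `L²ψ = Σⱼ Lⱼ(Lⱼψ)`. -/
def L2op (ψ : E3 → Fin 4 → ℂ) : E3 → Fin 4 → ℂ :=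
  fun x => ∑ j, Lop j (Lop j ψ) x

/-- The operator `(Σ·L)ψ = Σⱼ Σⱼ(Lⱼψ)`. -/
def SigL (ψ : E3 → Fin 4 → ℂ) : E3 → Fin 4 → ℂ :=
  fun x => ∑ j, (SigM j).mulVec (Lop j ψ x)

/-- Dirac's operator `Kψ = β(ψ + (Σ·L)ψ)`. -/
def Kop (ψ : E3 → Fin 4 → ℂ) : E3 → Fin 4 → ℂ :=
  fun x => betaM.mulVec (ψ x + SigL ψ x)


theorem pd_add (k : Fin 3) {φ χ : E3 → Fin 4 → ℂ} (hφ : Differentiable ℝ φ)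
    (hχ : Differentiable ℝ χ) : pd k (φ + χ) = pd k φ + pd k χ := by
  funext x
  simp [pd, fderiv_add (hφ x) (hχ x)]

theorem pd_clm_comp (k : Fin 3) (A : (Fin 4 → ℂ) →L[ℝ] (Fin 4 → ℂ)) {φ : E3 → Fin 4 → ℂ}
    (hφ : Differentiable ℝ φ) : pd k (fun x => A (φ x)) = fun x => A (pd k φ x) := by
  funext x
  have h := (A.hasFDerivAt.comp x (hφ x).hasFDerivAt).fderiv
  simpa [pd, Function.comp_def] using congrArg (fun f => f (EuclideanSpace.single k 1)) h

theorem pd_coord_smul (k a : Fin 3) {φ : E3 → Fin 4 → ℂ} (hφ : Differentiable ℝ φ) (x : E3) :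
    pd k (fun x => x a • φ x) x = x a • pd k φ x + (if a = k then (1 : ℝ) else 0) • φ x := by
  have hc : HasFDerivAt (fun x : E3 => x a) (EuclideanSpace.proj a : E3 →L[ℝ] ℝ) x :=
    (EuclideanSpace.proj a : E3 →L[ℝ] ℝ).hasFDerivAt
  have h := (hc.fun_smul (hφ x).hasFDerivAt).fderiv
  rw [pd, h]
  simp [pd]

theorem contDiff_pd (k : Fin 3) {φ : E3 → Fin 4 → ℂ} (hφ : ContDiff ℝ (⊤ : ℕ∞) φ) :
    ContDiff ℝ (⊤ : ℕ∞) (pd k φ) :=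
  (hφ.fderiv_right (m := (⊤ : ℕ∞)) (by simp)).clm_apply contDiff_const

theorem pd_comm (k l : Fin 3) {φ : E3 → Fin 4 → ℂ} (hφ : ContDiff ℝ (⊤ : ℕ∞) φ) (x : E3) :
    pd k (pd l φ) x = pd l (pd k φ) x := by
  have hd : DifferentiableAt ℝ (fderiv ℝ φ) x :=
    (hφ.fderiv_right (m := (⊤ : ℕ∞)) (by simp)).differentiable (by simp) x
  have hs : IsSymmSndFDerivAt ℝ φ x :=
    hφ.contDiffAt.isSymmSndFDerivAt (by simpa using WithTop.coe_le_coe.2 (le_top : (2 : ℕ∞) ≤ ⊤))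
  have key (i j : Fin 3) : pd i (pd j φ) x =
      fderiv ℝ (fderiv ℝ φ) x (EuclideanSpace.single i 1) (EuclideanSpace.single j 1) := by
    change fderiv ℝ (fun y => fderiv ℝ φ y (EuclideanSpace.single j 1)) x _ = _
    rw [fderiv_clm_apply hd (differentiableAt_const _)]
    simp
  rw [key, key, hs]

theorem contDiff_Lop (j : Fin 3) {φ : E3 → Fin 4 → ℂ} (hφ : ContDiff ℝ (⊤ : ℕ∞) φ) :
    ContDiff ℝ (⊤ : ℕ∞) (Lop j φ) := by
  have hc (a : Fin 3) : ContDiff ℝ (⊤ : ℕ∞) (fun x : E3 => x a) :=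
    (EuclideanSpace.proj a : E3 →L[ℝ] ℝ).contDiff
  exact ((((hc _).smul (contDiff_pd _ hφ)).sub ((hc _).smul (contDiff_pd _ hφ))).const_smul
    (-Complex.I))

theorem Lop_add (j : Fin 3) {φ χ : E3 → Fin 4 → ℂ} (hφ : Differentiable ℝ φ)
    (hχ : Differentiable ℝ χ) : Lop j (φ + χ) = Lop j φ + Lop j χ := by
  funext x
  simp only [Lop, pd_add _ hφ hχ, Pi.add_apply, smul_add, smul_sub]
  abel

theorem Lop_linearMap_comp (j : Fin 3) (A : (Fin 4 → ℂ) →ₗ[ℂ] (Fin 4 → ℂ))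
    {φ : E3 → Fin 4 → ℂ} (hφ : Differentiable ℝ φ) :
    Lop j (fun x => A (φ x)) = fun x => A (Lop j φ x) := by
  funext x
  have h (k : Fin 3) := pd_clm_comp k (A.restrictScalars ℝ).toContinuousLinearMap hφ
  simp only [LinearMap.coe_toContinuousLinearMap', LinearMap.coe_restrictScalars] at h
  simp only [Lop, h, map_smul, map_sub, LinearMap.map_smul_of_tower]

theorem Lop_const_smul (j : Fin 3) (c : ℂ) {φ : E3 → Fin 4 → ℂ} (hφ : Differentiable ℝ φ) :
    Lop j (c • φ) = c • Lop j φ := by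
  have h := Lop_linearMap_comp j (c • LinearMap.id) hφ
  simp only [LinearMap.smul_apply, LinearMap.id_apply] at h
  exact h

theorem pd_Lop (k j : Fin 3) {φ : E3 → Fin 4 → ℂ} (hφ : ContDiff ℝ (⊤ : ℕ∞) φ) (x : E3) :
    pd k (Lop j φ) x = (-Complex.I) •
      ((x (j + 1) • pd k (pd (j + 2) φ) x
          + (if j + 1 = k then (1 : ℝ) else 0) • pd (j + 2) φ x)
        - (x (j + 2) • pd k (pd (j + 1) φ) x
          + (if j + 2 = k then (1 : ℝ) else 0) • pd (j + 1) φ x)) := by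
  have hd (l : Fin 3) : Differentiable ℝ (pd l φ) := (contDiff_pd l hφ).differentiable (by simp)
  have hx (a l : Fin 3) : DifferentiableAt ℝ (fun y : E3 => y a • pd l φ y) x :=
    ((EuclideanSpace.proj a : E3 →L[ℝ] ℝ).differentiableAt).fun_smul (hd l x)
  rw [← pd_coord_smul k _ (hd _) x, ← pd_coord_smul k _ (hd _) x]
  change fderiv ℝ (fun y => (-Complex.I) •
    (y (j + 1) • pd (j + 2) φ y - y (j + 2) • pd (j + 1) φ y)) x _ = _
  rw [fderiv_fun_const_smul ((hx _ _).fun_sub (hx _ _)), fderiv_fun_sub (hx _ _) (hx _ _)]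
  rfl

theorem Lop_commutator (j : Fin 3) {φ : E3 → Fin 4 → ℂ} (hφ : ContDiff ℝ (⊤ : ℕ∞) φ) (x : E3) :
    Lop j (Lop (j + 1) φ) x - Lop (j + 1) (Lop j φ) x = Complex.I • Lop (j + 2) φ x := by
  have h01 := pd_comm 0 1 hφ x
  have h02 := pd_comm 0 2 hφ x
  have h12 := pd_comm 1 2 hφ x
  rw [Lop, Lop, Lop]
  simp only [pd_Lop _ _ hφ]
  ext i
  fin_cases j <;> simp [h01, h02, h12] <;> ring_nf

/-- The complex vector space of smooth spinor fields on `ℝ³`. -/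
def smoothSpinors : Submodule ℂ (E3 → Fin 4 → ℂ) where
  carrier := {φ | ContDiff ℝ (⊤ : ℕ∞) φ}
  add_mem' {φ χ} (hφ : ContDiff ℝ (⊤ : ℕ∞) φ) (hχ : ContDiff ℝ (⊤ : ℕ∞) χ) := hφ.add hχ
  zero_mem' := (contDiff_const : ContDiff ℝ (⊤ : ℕ∞) fun _ : E3 => (0 : Fin 4 → ℂ))
  smul_mem' c φ (hφ : ContDiff ℝ (⊤ : ℕ∞) φ) := hφ.const_smul c

theorem contDiff_of_smoothSpinors (φ : smoothSpinors) :
    ContDiff ℝ (⊤ : ℕ∞) (φ : E3 → Fin 4 → ℂ) :=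
  φ.2

theorem differentiable_of_smoothSpinors (φ : smoothSpinors) :
    Differentiable ℝ (φ : E3 → Fin 4 → ℂ) :=
  (contDiff_of_smoothSpinors φ).differentiable (by simp)

/-- `Lop j` as an endomorphism of the smooth spinor fields. -/
def LopEnd (j : Fin 3) : Module.End ℂ smoothSpinors where
  toFun φ := ⟨Lop j φ, contDiff_Lop j (contDiff_of_smoothSpinors φ)⟩
  map_add' φ χ := Subtype.ext <|
    Lop_add j (differentiable_of_smoothSpinors φ) (differentiable_of_smoothSpinors χ)
  map_smul' c φ := Subtype.ext <|
    Lop_const_smul j c (differentiable_of_smoothSpinors φ)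

/-- Pointwise multiplication by a constant matrix as an endomorphism of the smooth spinor fields. -/
def matEnd (A : Matrix (Fin 4) (Fin 4) ℂ) : Module.End ℂ smoothSpinors where
  toFun φ := ⟨fun x => A.mulVec (φ.1 x),
    (A.mulVecLin.restrictScalars ℝ).toContinuousLinearMap.contDiff.comp
      (contDiff_of_smoothSpinors φ)⟩
  map_add' φ χ := Subtype.ext <| funext fun x => A.mulVec_add (φ.1 x) (χ.1 x)
  map_smul' c φ := Subtype.ext <| funext fun x => A.mulVec_smul c (φ.1 x)

theorem commute_LopEnd_matEnd (j : Fin 3) (A : Matrix (Fin 4) (Fin 4) ℂ) :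
    Commute (LopEnd j) (matEnd A) :=
  LinearMap.ext fun φ => Subtype.ext <|
    Lop_linearMap_comp j A.mulVecLin (differentiable_of_smoothSpinors φ)

theorem LopEnd_commutator (j : Fin 3) :
    LopEnd j * LopEnd (j + 1) - LopEnd (j + 1) * LopEnd j = Complex.I • LopEnd (j + 2) :=
  LinearMap.ext fun φ => Subtype.ext <| funext fun x => Lop_commutator j (contDiff_of_smoothSpinors φ) x

/-- The square of a vector of operators satisfying the angular momentum relations commutes with
each of its components. -/
theorem commute_sum_sq_of_commutator {R : Type*} [Ring R] [Algebra ℂ R] (L : Fin 3 → R)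
    (h : ∀ j, L j * L (j + 1) - L (j + 1) * L j = Complex.I • L (j + 2)) (k : Fin 3) :
    Commute (∑ j, L j * L j) (L k) := by
  have hsum : ∑ j, L j * L j
      = L k * L k + L (k + 1) * L (k + 1) + L (k + 2) * L (k + 2) := by
    rw [Fin.sum_univ_three]
    fin_cases k <;> simp <;> abel
  have h₁ := h k
  have h₂ := h (k + 2)
  rw [show k + 2 + 1 = k by fin_cases k <;> rfl,
    show k + 2 + 2 = k + 1 by fin_cases k <;> rfl] at h₂
  rw [hsum, commute_iff_eq, ← sub_eq_zero]
  generalize L k = a at *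
  generalize L (k + 1) = b at *
  generalize L (k + 2) = c at *
  calc _ = -(b * (a * b - b * a) + (a * b - b * a) * b)
        + (c * (c * a - a * c) + (c * a - a * c) * c) := by noncomm_ring
    _ = 0 := by
      rw [h₁, h₂]
      simp only [mul_smul_comm, smul_mul_assoc]
      abel

/-- For smooth `ψ : ℝ³ → ℂ⁴`, the operator `L²` commutes with Dirac's operator `K`:
`L²(Kψ) = K(L²ψ)`. -/
theorem L2op_comm_Kop (ψ : E3 → Fin 4 → ℂ) (hψ : ContDiff ℝ (⊤ : ℕ∞) ψ) (x : E3) :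
    L2op (Kop ψ) x = Kop (L2op ψ) x := by
  let L2 : Module.End ℂ smoothSpinors := ∑ j, LopEnd j * LopEnd j
  let K : Module.End ℂ smoothSpinors := matEnd betaM * (1 + ∑ j, matEnd (SigM j) * LopEnd j)
  have hmat (A : Matrix (Fin 4) (Fin 4) ℂ) : Commute L2 (matEnd A) :=
    Commute.sum_left _ _ _ fun j _ =>
      (commute_LopEnd_matEnd j A).mul_left (commute_LopEnd_matEnd j A)
  have hcomm : Commute L2 K :=
    (hmat _).mul_right <| (Commute.one_right _).add_right <| Commute.sum_right _ _ _ fun j _ =>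
      (hmat _).mul_right (commute_sum_sq_of_commutator LopEnd LopEnd_commutator j)
  have hL2 (φ : smoothSpinors) : (L2 φ : E3 → Fin 4 → ℂ) = L2op φ := by
    funext y
    simp [L2, L2op, LopEnd]
  have hK (φ : smoothSpinors) : (K φ : E3 → Fin 4 → ℂ) = Kop φ := by
    funext y
    simp [K, Kop, SigL, LopEnd, matEnd]
  have h := congrArg Subtype.val (LinearMap.congr_fun hcomm.eq ⟨ψ, hψ⟩)
  simp only [Module.End.mul_apply, hL2, hK] at h
  exact congrFun h x

end
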